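/- Let s₀ > 0 and let a = −1/2, A = 1/2, with b⁻¹(y) = aA(e^y − 1)/(a·e^y − A) and B(y) = (a²·e^y − 2aA + A²·e^{−y})/(A·a² − a·A²). There is no differentiable function s : [0,∞) → ℝ with s(0) = s₀ satisfying s'(t) = B(s(t))·(b⁻¹(s(t)) − b⁻¹(s(t))³) for all t ≥ 0; that is, every solution of the barrier-transformed closed-loop system starting from a positive initial condition escapes to infinity in finite time. -/

import Mathlib

/-- The inverse barrier function `b⁻¹(y) = aA(e^y − 1)/(a·e^y − A)`. -/
noncomputable def barrierInv (a A y : ℝ) : ℝ :=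
  a * A * (Real.exp y - 1) / (a * Real.exp y - A)

/-- The function `B(y) = (a²·e^y − 2aA + A²·e^{−y})/(A·a² − a·A²)`. -/
noncomputable def barrierB (a A y : ℝ) : ℝ :=
  (a ^ 2 * Real.exp y - 2 * a * A + A ^ 2 * Real.exp (-y)) / (A * a ^ 2 - a * A ^ 2)

/-!
In the original coordinate `x = b⁻¹(s)` the transformed system is `ẋ = x − x³`. Since `b⁻¹` maps
into `(a, A) ⊆ (−1, 1)`, every transformed trajectory satisfies `x ẋ = x²(1 − x²) ≥ c x²` for some
`c > 0`. By Grönwall, `x(t)² ≥ x(0)² exp (2ct)`, and since `x(0) ≠ 0` this growth is incompatible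
with `x` staying in `(a, A)` for all time.
-/

open Set Filter Real

section Growth

theorem mul_exp_le_of_mul_le_deriv_right {f f' : ℝ → ℝ} {K a b : ℝ}
    (hf : ContinuousOn f (Icc a b)) (hf' : ∀ t ∈ Ico a b, HasDerivWithinAt f (f' t) (Ici t) t)
    (bound : ∀ t ∈ Ico a b, K * f t ≤ f' t) {t : ℝ} (ht : t ∈ Icc a b) :
    f a * exp (K * (t - a)) ≤ f t := by
  have gronwall : -f t ≤ gronwallBound (-f a) K 0 (t - a) :=
    le_gronwallBound_of_liminf_deriv_right_le hf.fun_neg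
      (fun u hu _ hr ↦ (hf' u hu).fun_neg.liminf_right_slope_le hr) le_rfl
      (fun u hu ↦ by linarith [bound u hu]) t ht
  rw [gronwallBound_ε0] at gronwall
  linarith

variable {E : Type*} [NormedAddCommGroup E] [InnerProductSpace ℝ E]
  {γ : ℝ → E} {v : ℝ → E → E} {c t₀ : ℝ}

theorem norm_sq_mul_exp_le_of_isIntegralCurveOn (hγ : IsIntegralCurveOn γ v (Ici t₀))
    (hv : ∀ t ≥ t₀, c * ‖γ t‖ ^ 2 ≤ inner ℝ (γ t) (v t (γ t))) {t : ℝ} (ht : t₀ ≤ t) :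
    ‖γ t₀‖ ^ 2 * exp (2 * c * (t - t₀)) ≤ ‖γ t‖ ^ 2 := by
  have hderiv : ∀ u ≥ t₀,
      HasDerivWithinAt (fun u ↦ ‖γ u‖ ^ 2) (2 * inner ℝ (γ u) (v u (γ u))) (Ici t₀) u :=
    fun u hu ↦ (hγ u hu).norm_sq
  exact mul_exp_le_of_mul_le_deriv_right
    (fun u hu ↦ (hderiv u hu.1).continuousWithinAt.mono Icc_subset_Ici_self)
    (fun u hu ↦ (hderiv u hu.1).mono (Ici_subset_Ici.mpr hu.1))
    (fun u hu ↦ by linarith [hv u hu.1]) (right_mem_Icc.mpr ht)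

theorem not_isBounded_image_of_isIntegralCurveOn (hγ : IsIntegralCurveOn γ v (Ici t₀))
    (hc : 0 < c) (hv : ∀ t ≥ t₀, c * ‖γ t‖ ^ 2 ≤ inner ℝ (γ t) (v t (γ t))) (h₀ : γ t₀ ≠ 0) :
    ¬ Bornology.IsBounded (γ '' Ici t₀) := by
  intro hbdd
  obtain ⟨R, hR⟩ := isBounded_iff_forall_norm_le.mp hbdd
  have hgrowth : Tendsto (fun t ↦ ‖γ t₀‖ ^ 2 * exp (2 * c * (t - t₀))) atTop atTop :=
    (tendsto_exp_atTop.comp ((tendsto_atTop_add_const_right _ (-t₀) tendsto_id).const_mul_atTop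
      (by positivity))).const_mul_atTop (by positivity)
  obtain ⟨t, hlarge, ht⟩ :=
    ((hgrowth.eventually_gt_atTop (R ^ 2)).and (eventually_ge_atTop t₀)).exists
  have hsmall : ‖γ t‖ ^ 2 ≤ R ^ 2 := by
    gcongr
    exact hR _ (mem_image_of_mem γ ht)
  linarith [norm_sq_mul_exp_le_of_isIntegralCurveOn hγ hv ht]

end Growth

section Barrier

variable {a A : ℝ}

theorem mul_exp_sub_neg (ha : a < 0) (hA : 0 < A) (y : ℝ) : a * exp y - A < 0 := by
  linarith [mul_neg_of_neg_of_pos ha (exp_pos y)]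

theorem barrierInv_mem_Ioo (ha : a < 0) (hA : 0 < A) (y : ℝ) : barrierInv a A y ∈ Ioo a A := by
  have hden := mul_exp_sub_neg ha hA y
  have hleft : barrierInv a A y - a = -a * exp y * (A - a) / -(a * exp y - A) := by
    rw [barrierInv]
    field_simp [hden.ne]
    ring
  have hright : A - barrierInv a A y = A * (A - a) / -(a * exp y - A) := by
    rw [barrierInv]
    field_simp [hden.ne]
    ring
  have ha' : 0 < -a := neg_pos.mpr ha
  have hden' : 0 < -(a * exp y - A) := neg_pos.mpr hden
  have hwidth : 0 < A - a := by linarith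
  exact ⟨sub_pos.mp (hleft ▸ by positivity), sub_pos.mp (hright ▸ by positivity)⟩

theorem barrierInv_eq_zero_iff (ha : a < 0) (hA : 0 < A) {y : ℝ} :
    barrierInv a A y = 0 ↔ y = 0 := by
  simp [barrierInv, ha.ne, hA.ne', (mul_exp_sub_neg ha hA y).ne, sub_eq_zero]

theorem barrierB_eq (a A y : ℝ) :
    barrierB a A y = (a * exp y - A) ^ 2 / (a * A * (a - A) * exp y) := by
  have hnum : a ^ 2 * exp y - 2 * a * A + A ^ 2 * exp (-y) = (a * exp y - A) ^ 2 / exp y := by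
    rw [exp_neg]
    field_simp
    ring
  rw [barrierB, hnum, div_div]
  ring_nf

theorem barrierB_ne_zero (ha : a < 0) (hA : 0 < A) (y : ℝ) : barrierB a A y ≠ 0 := by
  have hden := (mul_exp_sub_neg ha hA y).ne
  have hwidth : a - A ≠ 0 := by linarith
  rw [barrierB_eq]
  exact div_ne_zero (pow_ne_zero 2 hden)
    (mul_ne_zero (mul_ne_zero (mul_ne_zero ha.ne hA.ne') hwidth) (exp_ne_zero y))

theorem hasDerivAt_barrierInv (ha : a < 0) (hA : 0 < A) (y : ℝ) :
    HasDerivAt (barrierInv a A) (barrierB a A y)⁻¹ y := by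
  have hden := (mul_exp_sub_neg ha hA y).ne
  have hquot := (((hasDerivAt_exp y).sub_const 1).const_mul (a * A)).fun_div
    (((hasDerivAt_exp y).const_mul a).sub_const A) hden
  refine hquot.congr_deriv ?_
  rw [barrierB_eq, inv_div]
  ring

/-- The vector field `ṡ = B(s) v(t, b⁻¹(s))` to which the barrier change of variables `s = b(x)`
transforms `ẋ = v(t, x)`. -/
noncomputable def barrierField (a A : ℝ) (v : ℝ → ℝ → ℝ) (t y : ℝ) : ℝ :=
  barrierB a A y * v t (barrierInv a A y)

variable {v : ℝ → ℝ → ℝ} {s : ℝ → ℝ}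

theorem isIntegralCurveOn_barrierInv_comp (ha : a < 0) (hA : 0 < A) {S : Set ℝ}
    (hs : IsIntegralCurveOn s (barrierField a A v) S) :
    IsIntegralCurveOn (barrierInv a A ∘ s) v S := fun t ht ↦
  ((hasDerivAt_barrierInv ha hA (s t)).comp_hasDerivWithinAt t (hs t ht)).congr_deriv
    (inv_mul_cancel_left₀ (barrierB_ne_zero ha hA (s t)) _)

theorem not_isIntegralCurveOn_barrierField_Ici (ha : a < 0) (hA : 0 < A) {c t₀ : ℝ} (hc : 0 < c)
    (hv : ∀ t ≥ t₀, ∀ x ∈ Ioo a A, c * x ^ 2 ≤ x * v t x) (h₀ : s t₀ ≠ 0) :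
    ¬ IsIntegralCurveOn s (barrierField a A v) (Ici t₀) := by
  intro hs
  have hmem (t : ℝ) : (barrierInv a A ∘ s) t ∈ Ioo a A := barrierInv_mem_Ioo ha hA (s t)
  refine not_isBounded_image_of_isIntegralCurveOn (isIntegralCurveOn_barrierInv_comp ha hA hs) hc
    (fun t ht ↦ ?_) (mt (barrierInv_eq_zero_iff ha hA).mp h₀)
    ((Metric.isBounded_Ioo a A).subset (image_subset_iff.mpr fun t _ ↦ hmem t))
  rw [norm_eq_abs, sq_abs, RCLike.inner_apply', conj_trivial]
  exact hv t ht _ (hmem t)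

end Barrier

theorem exists_pos_mul_sq_le_mul_sub_cube {a A : ℝ} (ha : -1 < a) (hA : A < 1) :
    ∃ c > 0, ∀ x ∈ Ioo a A, c * x ^ 2 ≤ x * (x - x ^ 3) := by
  obtain ⟨r, hr, hr₁⟩ := exists_between (max_lt (max_lt (neg_lt.mp ha) hA) one_pos)
  obtain ⟨⟨har, hAr⟩, hr₀⟩ : (-a < r ∧ A < r) ∧ 0 < r := by simpa only [max_lt_iff] using hr
  refine ⟨1 - r ^ 2, by nlinarith, fun x hx ↦ ?_⟩
  have hxr : x ^ 2 ≤ r ^ 2 := sq_le_sq' (by linarith [hx.1]) (by linarith [hx.2])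
  calc (1 - r ^ 2) * x ^ 2 ≤ (1 - x ^ 2) * x ^ 2 := by gcongr
    _ = x * (x - x ^ 3) := by ring

theorem transformed_solution_escapes_general {a A s₀ : ℝ} (ha : a ∈ Ioo (-1) 0)
    (hA : A ∈ Ioo 0 1) (hs₀ : s₀ ≠ 0) :
    ¬ ∃ s : ℝ → ℝ, s 0 = s₀ ∧ ∀ t ≥ (0 : ℝ),
      HasDerivWithinAt s
        (barrierB a A (s t) * (barrierInv a A (s t) - (barrierInv a A (s t)) ^ 3))
        (Ici 0) t := by
  rintro ⟨s, rfl, hs⟩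
  obtain ⟨c, hc, hcubic⟩ := exists_pos_mul_sq_le_mul_sub_cube ha.1 hA.2
  exact not_isIntegralCurveOn_barrierField_Ici (v := fun _ x ↦ x - x ^ 3) ha.2 hA.1 hc
    (fun _ _ ↦ hcubic) hs₀ hs

/-- With `a = −1/2`, `A = 1/2`, there is no differentiable function
`s : [0,∞) → ℝ` with `s(0) = s₀ > 0` satisfying
`s'(t) = B(s(t))·(b⁻¹(s(t)) − b⁻¹(s(t))³)` for all `t ≥ 0`: every solution of the
barrier-transformed closed-loop system starting from a positive initial condition
escapes to infinity in finite time. -/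
theorem transformed_solution_escapes (s₀ : ℝ) (hs₀ : 0 < s₀) :
    ¬ ∃ s : ℝ → ℝ, s 0 = s₀ ∧ ∀ t ≥ (0 : ℝ),
      HasDerivWithinAt s
        (barrierB (-(1/2)) (1/2) (s t) *
          (barrierInv (-(1/2)) (1/2) (s t) - (barrierInv (-(1/2)) (1/2) (s t)) ^ 3))
        (Set.Ici 0) t :=
  transformed_solution_escapes_general (by norm_num) (by norm_num) hs₀.ne'
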